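/- Let g be a finite-dimensional semisimple Lie algebra over a field K of characteristic zero and let V be a finite-dimensional Lie module over g. If φ : g → V is a linear map satisfying φ(⁅v₁, v₂⁆) = ⁅v₁, φ(v₂)⁆ − ⁅v₂, φ(v₁)⁆ for all v₁, v₂ ∈ g, then there exists x ∈ V such that φ(v) = ⁅v, x⁆ for every v ∈ g. -/

import Mathlib

open LieModule LieAlgebra in
/-- A semisimple Lie algebra is perfect. -/
lemma wfl_derived_eq_top (K L : Type*) [Field K] [LieRing L] [LieAlgebra K L]
    [LieAlgebra.IsSemisimple K L] : derivedSeries K L 1 = ⊤ := by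
  rw [eq_top_iff, ← IsSemisimple.sSup_atoms_eq_top (R := K) (L := L)]
  refine sSup_le fun I hI => ?_
  rw [← lie_eq_self_of_isAtom_of_nonabelian I hI (IsSemisimple.non_abelian_of_isAtom I hI)]
  rw [derivedSeries_def, derivedSeriesOfIdeal_succ, derivedSeriesOfIdeal_zero]
  exact LieSubmodule.mono_lie le_top le_top

/-- Invariance of the Casimir tensor. -/
lemma wfl_casimir {K L J W ι : Type*} [Field K] [LieRing L]
    [AddCommGroup J] [Module K J] [LieRingModule L J]
    [AddCommGroup W] [Module K W] [Fintype ι] [DecidableEq ι]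
    (B : LinearMap.BilinForm K J) (hB : B.Nondegenerate) (hs : B.IsSymm)
    (hinv : B.lieInvariant L) (b : Module.Basis ι K J)
    (f : J →ₗ[K] J →ₗ[K] W) (v : L) :
    ∑ i, (f ⁅v, b i⁆ (B.dualBasis hB b i) + f (b i) ⁅v, B.dualBasis hB b i⁆) = 0 := by
  have h1 : ∀ x : J, x = ∑ j, B x (B.dualBasis hB b j) • b j := fun x => by
    conv_lhs => rw [← (B.dualBasis hB (B.dualBasis hB b)).sum_repr x]
    simp only [LinearMap.BilinForm.dualBasis_repr_apply]
    rw [LinearMap.BilinForm.dualBasis_dualBasis hB hs]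
  have h2 : ∀ x : J, x = ∑ j, B x (b j) • B.dualBasis hB b j := fun x => by
    conv_lhs => rw [← (B.dualBasis hB b).sum_repr x]
    simp only [LinearMap.BilinForm.dualBasis_repr_apply]
  rw [Finset.sum_add_distrib]
  have e1 : ∀ i, f ⁅v, b i⁆ (B.dualBasis hB b i) =
      ∑ j, B ⁅v, b i⁆ (B.dualBasis hB b j) • f (b j) (B.dualBasis hB b i) := fun i => by
    conv_lhs => rw [h1 ⁅v, b i⁆]
    simp [LinearMap.sum_apply]
  have e2 : ∀ i, f (b i) ⁅v, B.dualBasis hB b i⁆ =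
      ∑ j, B ⁅v, B.dualBasis hB b i⁆ (b j) • f (b i) (B.dualBasis hB b j) := fun i => by
    conv_lhs => rw [h2 ⁅v, B.dualBasis hB b i⁆]
    simp
  simp_rw [e1, e2]
  rw [Finset.sum_comm, ← Finset.sum_add_distrib]
  refine Finset.sum_eq_zero fun i _ => ?_
  rw [← Finset.sum_add_distrib]
  refine Finset.sum_eq_zero fun j _ => ?_
  rw [← add_smul, hinv, hs.eq, neg_add_cancel, zero_smul]

open LieModule LieAlgebra in
lemma wfl_trivial {K L V : Type*} [Field K] [CharZero K] [LieRing L] [LieAlgebra K L]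
    [FiniteDimensional K L] [LieAlgebra.IsSemisimple K L] [AddCommGroup V] [Module K V]
    [FiniteDimensional K V] [LieRingModule L V] [LieModule K L V] [Nontrivial V]
    (hirr : ∀ W : LieSubmodule K L V, W = ⊥ ∨ W = ⊤)
    (h : traceForm K L V = 0) (x : L) (m : V) : ⁅x, m⁆ = 0 := by
  have hn := LieModule.isNilpotent_derivedSeries_of_traceForm_eq_zero h
  have hn' : LieModule.IsNilpotent L V := by
    rw [LieModule.isNilpotent_iff_forall' (R := K)] at hn ⊢
    intro y
    have hy : y ∈ derivedSeries K L 1 := by rw [wfl_derived_eq_top]; trivial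
    exact hn ⟨y, hy⟩
  have hnt := nontrivial_max_triv_of_isNilpotent K L V
  rcases hirr (maxTrivSubmodule K L V) with h0 | h0
  · rw [h0] at hnt
    exact absurd hnt (not_nontrivial _)
  · have : m ∈ maxTrivSubmodule K L V := by rw [h0]; trivial
    exact (mem_maxTrivSubmodule K L V m).1 this x

open LieModule LieAlgebra in
lemma wfl_irred {K L V : Type*} [Field K] [CharZero K] [LieRing L] [LieAlgebra K L]
    [FiniteDimensional K L] [LieAlgebra.IsSemisimple K L] [AddCommGroup V] [Module K V]
    [FiniteDimensional K V] [LieRingModule L V] [LieModule K L V] [Nontrivial V]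
    (hirr : ∀ W : LieSubmodule K L V, W = ⊥ ∨ W = ⊤)
    (φ : L →ₗ[K] V)
    (hφ : ∀ v₁ v₂ : L, φ ⁅v₁, v₂⁆ = ⁅v₁, φ v₂⁆ - ⁅v₂, φ v₁⁆) :
    ∃ x : V, ∀ v : L, φ v = ⁅v, x⁆ := by
  classical
  by_cases hB0 : traceForm K L V = 0
  · have ht := wfl_trivial hirr hB0
    refine ⟨0, fun v => ?_⟩
    rw [lie_zero]
    have hv : v ∈ (derivedSeries K L 1 : LieIdeal K L).toSubmodule := by
      rw [wfl_derived_eq_top]; trivial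
    rw [derivedSeries_def, derivedSeriesOfIdeal_succ, derivedSeriesOfIdeal_zero,
      LieSubmodule.lieIdeal_oper_eq_linear_span'] at hv
    have hle : Submodule.span K {m | ∃ x ∈ (⊤ : LieIdeal K L), ∃ n ∈ (⊤ : LieIdeal K L), ⁅x, n⁆ = m}
        ≤ LinearMap.ker φ := by
      rw [Submodule.span_le]
      rintro _ ⟨x, -, y, -, rfl⟩
      simp [hφ, ht]
    exact hle hv
  set B := traceForm K L V with hBdef
  have hBinv : B.lieInvariant L := traceForm_lieInvariant K L V
  let I : LieIdeal K L := InvariantForm.orthogonal B hBinv ⊤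
  have hI : ∀ x, x ∈ I ↔ ∀ y, B y x = 0 := fun x => by
    simp [I, InvariantForm.mem_orthogonal]
  let J : LieIdeal K L := I.killingCompl
  have hIJ : IsCompl I J := LieIdeal.isCompl_killingCompl I
  let BJ : LinearMap.BilinForm K J := B.restrict J.toSubmodule
  have hBJ : ∀ x y : J, BJ x y = B x y := fun _ _ => rfl
  have hsymm : BJ.IsSymm := ⟨fun x y => traceForm_comm K L V x y⟩
  have hinvJ : BJ.lieInvariant L := fun v x y => hBinv v x y
  have hnd : BJ.Nondegenerate := by
    refine hsymm.isRefl.nondegenerate_iff_separatingLeft.mpr fun x hx => ?_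
    have hxI : (x : L) ∈ I := by
      rw [hI]
      intro y
      have hy : y ∈ I ⊔ J := by rw [hIJ.sup_eq_top]; trivial
      obtain ⟨a, ha, c, hc, rfl⟩ := (LieSubmodule.mem_sup _ _ _).1 hy
      have h1 : B a x = 0 := by rw [traceForm_comm]; exact (hI a).1 ha x
      have h2 : B c x = 0 := by rw [traceForm_comm]; exact hx ⟨c, hc⟩
      simp [h1, h2]
    have : (x : L) ∈ I ⊓ J := ⟨hxI, x.2⟩
    rw [hIJ.inf_eq_bot, LieSubmodule.mem_bot] at this
    exact Subtype.ext this
  let b := Module.finBasis K J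
  let d := BJ.dualBasis hnd b
  let ρ := (toEnd K L V : L →ₗ[K] Module.End K V)
  let ι := J.toSubmodule.subtype
  -- the Casimir operator
  let c : Module.End K V := ∑ i, (ρ (b i)) * (ρ (d i))
  have hccomm : ∀ (v : L) (m : V), ⁅v, c m⁆ = c ⁅v, m⁆ := by
    intro v m
    have := wfl_casimir (L := L) BJ hnd hsymm hinvJ b
      ((LinearMap.mul K (Module.End K V)).compl₁₂ (ρ ∘ₗ ι) (ρ ∘ₗ ι)) v
    have h := LinearMap.congr_fun this m
    simp only [LinearMap.sum_apply, LinearMap.add_apply, LinearMap.zero_apply] at h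
    rw [← sub_eq_zero, ← h]
    simp only [c, LinearMap.sum_apply]
    rw [lie_sum, ← Finset.sum_sub_distrib]
    refine Finset.sum_congr rfl fun i _ => ?_
    change ⁅v, ⁅(b i : L), ⁅(d i : L), m⁆⁆⁆ - ⁅(b i : L), ⁅(d i : L), ⁅v, m⁆⁆⁆ =
      ⁅⁅v, (b i : L)⁆, ⁅(d i : L), m⁆⁆ + ⁅(b i : L), ⁅⁅v, (d i : L)⁆, m⁆⁆
    simp only [lie_lie, lie_sub]
    abel
  have hctr : LinearMap.trace K V c = Module.finrank K J := by
    have : ∀ i, LinearMap.trace K V (ρ (b i) * ρ (d i)) = 1 := fun i => by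
      have := LinearMap.BilinForm.apply_dualBasis_right hnd hsymm b i i
      rw [if_pos rfl] at this
      exact this
    simp [c, this]
  have hJ : Module.finrank K J ≠ 0 := by
    intro h0
    apply hB0
    have hJb : J = ⊥ := by
      have : Subsingleton J := Module.finrank_zero_iff.1 h0
      rw [LieSubmodule.eq_bot_iff]
      intro m hm
      exact congrArg Subtype.val (Subsingleton.elim (⟨m, hm⟩ : J) 0)
    have hIt : I = ⊤ := by
      have := hIJ.sup_eq_top
      rwa [hJb, sup_bot_eq] at this
    ext x y
    exact (hI y).1 (by rw [hIt]; trivial) x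
  have hc0 : c ≠ 0 := by
    intro h
    rw [h, map_zero] at hctr
    exact hJ (by exact_mod_cast hctr.symm)
  let N : LieSubmodule K L V :=
    { LinearMap.ker c with
      lie_mem := by
        intro v m hm
        have hm' : c m = 0 := hm
        change c ⁅v, m⁆ = 0
        rw [← hccomm, hm', lie_zero] }
  have hN : ∀ m, m ∈ N ↔ c m = 0 := fun m => Iff.rfl
  have hinj : Function.Injective c := by
    rcases hirr N with h | h
    · rw [injective_iff_map_eq_zero]
      intro m hm
      have := (hN m).2 hm
      rwa [h, LieSubmodule.mem_bot] at this
    · exfalso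
      apply hc0
      ext m
      exact (hN m).1 (by rw [h]; trivial)
  have hsurj := LinearMap.surjective_of_injective hinj
  let x0 : V := ∑ i, ⁅(b i : L), φ (d i)⁆
  obtain ⟨x, hx⟩ := hsurj x0
  refine ⟨x, fun v => hinj ?_⟩
  rw [← hccomm, hx]
  have h := wfl_casimir (L := L) BJ hnd hsymm hinvJ b
      ((ρ : L →ₗ[K] V →ₗ[K] V).compl₁₂ ι (φ ∘ₗ ι)) v
  symm
  rw [← sub_eq_zero, ← h]
  simp only [c, x0, LinearMap.sum_apply]
  rw [lie_sum, ← Finset.sum_sub_distrib]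
  refine Finset.sum_congr rfl fun i _ => ?_
  change ⁅v, ⁅(b i : L), φ (d i)⁆⁆ - ⁅(b i : L), ⁅(d i : L), φ v⁆⁆ =
      ⁅⁅v, (b i : L)⁆, φ (d i)⁆ + ⁅(b i : L), φ ⁅v, (d i : L)⁆⁆
  rw [hφ]
  simp only [lie_lie, lie_sub]
  abel

lemma wfl_aux {K : Type*} [Field K] [CharZero K]
    {L : Type*} [LieRing L] [LieAlgebra K L] [FiniteDimensional K L]
    [LieAlgebra.IsSemisimple K L] (n : ℕ) :
    ∀ (V : Type*) [AddCommGroup V] [Module K V] [FiniteDimensional K V]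
    [LieRingModule L V] [LieModule K L V] (_ : Module.finrank K V = n)
    (φ : L →ₗ[K] V)
    (_ : ∀ v₁ v₂ : L, φ ⁅v₁, v₂⁆ = ⁅v₁, φ v₂⁆ - ⁅v₂, φ v₁⁆),
    ∃ x : V, ∀ v : L, φ v = ⁅v, x⁆ := by
  induction n using Nat.strong_induction_on with
  | _ n ih =>
  intro V _ _ _ _ _ hn φ hφ
  rcases subsingleton_or_nontrivial V with hV | hV
  · exact ⟨0, fun v => Subsingleton.elim _ _⟩
  by_cases hirr : ∀ W : LieSubmodule K L V, W = ⊥ ∨ W = ⊤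
  · exact wfl_irred hirr φ hφ
  push Not at hirr
  obtain ⟨W, hW0, hW1⟩ := hirr
  have hW0' : W.toSubmodule ≠ ⊥ := by simpa using hW0
  have hW1' : W.toSubmodule ≠ ⊤ := by simpa using hW1
  have hlt1 : Module.finrank K W < n := hn ▸ Submodule.finrank_lt hW1'
  have hlt2 : Module.finrank K (V ⧸ W) < n := by
    have h1 := Submodule.finrank_quotient_add_finrank W.toSubmodule
    have h2 : 0 < Module.finrank K W.toSubmodule := by
      rw [Nat.pos_iff_ne_zero]
      exact fun h => hW0' (Submodule.finrank_eq_zero.1 h)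
    change Module.finrank K (V ⧸ W.toSubmodule) < n
    omega
  let π := LieSubmodule.Quotient.mk' W
  obtain ⟨y, hy⟩ := ih _ hlt2 (V ⧸ W) rfl ((π : V →ₗ[K] V ⧸ W) ∘ₗ φ) (by
    intro v₁ v₂
    change π (φ ⁅v₁, v₂⁆) = ⁅v₁, π (φ v₂)⁆ - ⁅v₂, π (φ v₁)⁆
    rw [hφ, map_sub, LieModuleHom.map_lie, LieModuleHom.map_lie])
  obtain ⟨y, rfl⟩ := LieSubmodule.Quotient.surjective_mk' W y
  have hmem : ∀ v, φ v - ⁅v, y⁆ ∈ W := by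
    intro v
    have h : π (φ v) = ⁅v, π y⁆ := hy v
    rw [← LieSubmodule.Quotient.mk_eq_zero]
    change π _ = 0
    rw [map_sub, LieModuleHom.map_lie, h, sub_self]
  let ψ : L →ₗ[K] W :=
    LinearMap.codRestrict W.toSubmodule
      (φ - ((LieModule.toEnd K L V : L →ₗ[K] Module.End K V).flip y)) hmem
  have hψ : ∀ v, ((ψ v : W) : V) = φ v - ⁅v, y⁆ := fun v => rfl
  obtain ⟨z, hz⟩ := ih _ hlt1 W rfl ψ (by
    intro v₁ v₂
    apply Subtype.ext
    rw [hψ, LieSubmodule.coe_sub, LieSubmodule.coe_bracket, LieSubmodule.coe_bracket, hψ, hψ, hφ]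
    simp only [lie_lie, lie_sub]
    abel)
  refine ⟨y + z, fun v => ?_⟩
  have h := congrArg (fun w : W => (w : V)) (hz v)
  simp only [hψ, LieSubmodule.coe_bracket] at h
  rw [lie_add, ← h]
  abel

/-- Whitehead-type theorem: every 1-cocycle of a finite-dimensional semisimple Lie
algebra (over a field of characteristic zero) with values in a finite-dimensional
Lie module is a coboundary. -/
theorem whitehead_first_lemma
    {K : Type*} [Field K] [CharZero K]
    {L : Type*} [LieRing L] [LieAlgebra K L] [FiniteDimensional K L]
    [LieAlgebra.IsSemisimple K L]
    {V : Type*} [AddCommGroup V] [Module K V] [FiniteDimensional K V]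
    [LieRingModule L V] [LieModule K L V]
    (φ : L →ₗ[K] V)
    (hφ : ∀ v₁ v₂ : L, φ ⁅v₁, v₂⁆ = ⁅v₁, φ v₂⁆ - ⁅v₂, φ v₁⁆) :
    ∃ x : V, ∀ v : L, φ v = ⁅v, x⁆ :=
  wfl_aux _ V rfl φ hφ
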